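/- Let n be a natural number and let q, a, b, c be complex numbers with q ≠ 0, c ≠ 0, such that (c;q)_k, (a b q^{1−n}/c;q)_k and (q;q)_k are nonzero for 0 ≤ k ≤ n, and (c;q)_n and (c/(ab);q)_n are nonzero (with a, b ≠ 0). Then ∑_{k=0}^{n} ((a;q)_k (b;q)_k (q^{−n};q)_k) / ((c;q)_k (a b q^{1−n}/c;q)_k (q;q)_k) · q^k = ((c/a;q)_n (c/b;q)_n) / ((c;q)_n (c/(ab);q)_n). -/

import Mathlib

/-!
Put `d = c / (ab)` and clear denominators: reversing the factors of `(q^{-n};q)_k` and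
`(d⁻¹q^{1-n};q)_k` turns the sum into the identity
`∑ₖ [n choose k]_q (a)ₖ (b)ₖ dᵏ (d)ₙ₋ₖ (abdqᵏ)ₙ₋ₖ = (ad)ₙ (bd)ₙ`,
which involves no division and is true in every commutative ring. Going from `n` to `n + 1`
multiplies the right-hand side by `(1 - adqⁿ)(1 - bdqⁿ)`. On the left, a combination of the two
`q`-Pascal rules splits each new summand between its two neighbours in the row `n`, and the two
shares which a given old summand receives add up to that same factor.
-/

/-- The q-shifted factorial `(a;q)_m = (1−a)(1−aq)⋯(1−a q^{m−1})`, with `(a;q)_0 = 1`. -/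
def qShiftedFactorial (a q : ℂ) (m : ℕ) : ℂ := ∏ i ∈ Finset.range m, (1 - a * q ^ i)

open Finset

lemma sum_antidiagonal_succ_of_split {M : Type*} [AddCommMonoid M] (t u v : ℕ → ℕ → M)
    (hleft : ∀ m, t 0 (m + 1) = u 0 m) (hright : ∀ k, t (k + 1) 0 = v k 0)
    (hsplit : ∀ k m, t (k + 1) (m + 1) = u (k + 1) m + v k (m + 1)) (n : ℕ) :
    ∑ p ∈ antidiagonal (n + 1), t p.1 p.2 = ∑ p ∈ antidiagonal n, (u p.1 p.2 + v p.1 p.2) := by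
  rw [sum_add_distrib]
  cases n with
  | zero => simp [Nat.sum_antidiagonal_succ, hleft, hright]
  | succ n =>
    rw [Nat.sum_antidiagonal_succ, Nat.sum_antidiagonal_succ', Nat.sum_antidiagonal_succ,
      Nat.sum_antidiagonal_succ' (f := fun p ↦ v p.1 p.2)]
    simp only [hleft, hright, hsplit, sum_add_distrib]
    abel

section CommSemiring

variable {R : Type*} [CommSemiring R]

/-- The Gaussian binomial coefficient `[n choose k]_q`, defined by one of its two Pascal rules so
that it makes sense without division, also where `(q;q)_k` vanishes. -/
def gaussBinom (q : R) : ℕ → ℕ → R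
  | _, 0 => 1
  | 0, _ + 1 => 0
  | n + 1, k + 1 => gaussBinom q n k + q ^ (k + 1) * gaussBinom q n (k + 1)

@[simp]
lemma gaussBinom_zero_right (q : R) (n : ℕ) : gaussBinom q n 0 = 1 := by
  cases n <;> rfl

lemma gaussBinom_succ_succ (q : R) (n k : ℕ) :
    gaussBinom q (n + 1) (k + 1) = gaussBinom q n k + q ^ (k + 1) * gaussBinom q n (k + 1) :=
  rfl

lemma gaussBinom_eq_zero_of_lt (q : R) {n k : ℕ} (h : n < k) : gaussBinom q n k = 0 := by
  induction n generalizing k with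
  | zero => cases k with
    | zero => omega
    | succ k => rfl
  | succ n ih => cases k with
    | zero => omega
    | succ k => rw [gaussBinom_succ_succ, ih (by omega), ih (by omega), mul_zero, add_zero]

@[simp]
lemma gaussBinom_self (q : R) (n : ℕ) : gaussBinom q n n = 1 := by
  induction n with
  | zero => rfl
  | succ n ih => rw [gaussBinom_succ_succ, ih, gaussBinom_eq_zero_of_lt q n.lt_succ_self,
      mul_zero, add_zero]

lemma gaussBinom_succ_succ' (q : R) (k m : ℕ) :
    gaussBinom q (k + m + 1) (k + 1) =
      gaussBinom q (k + m) (k + 1) + q ^ m * gaussBinom q (k + m) k := by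
  induction m generalizing k with
  | zero => simp [gaussBinom_eq_zero_of_lt q k.lt_succ_self]
  | succ m ihm =>
    induction k with
    | zero =>
      have h := ihm 0
      simp only [zero_add, gaussBinom_zero_right] at h ⊢
      conv_rhs => rw [gaussBinom_succ_succ q m 0]
      rw [gaussBinom_succ_succ q (m + 1) 0, h, gaussBinom_zero_right, gaussBinom_zero_right]
      ring
    | succ k ihk =>
      have h := ihm (k + 1)
      rw [show k + 1 + m = k + (m + 1) by omega] at h
      rw [show k + 1 + (m + 1) = k + (m + 1) + 1 by omega, gaussBinom_succ_succ]
      conv_rhs => rw [gaussBinom_succ_succ q _ (k + 1), gaussBinom_succ_succ q _ k]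
      rw [ihk, h]
      ring

end CommSemiring

section CommRing

variable {R : Type*} [CommRing R]

/-- The q-shifted factorial `(a;q)_m` in an arbitrary commutative ring, unfolding over `ℂ`
to the same product as `qShiftedFactorial`. -/
def qPochhammer (a q : R) (m : ℕ) : R := ∏ i ∈ range m, (1 - a * q ^ i)

@[simp]
lemma qPochhammer_zero (a q : R) : qPochhammer a q 0 = 1 :=
  prod_range_zero _

lemma qPochhammer_succ (a q : R) (m : ℕ) :
    qPochhammer a q (m + 1) = qPochhammer a q m * (1 - a * q ^ m) :=
  prod_range_succ _ m

lemma qPochhammer_add (a q : R) (k m : ℕ) :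
    qPochhammer a q (k + m) = qPochhammer a q k * qPochhammer (a * q ^ k) q m := by
  simp only [qPochhammer, prod_range_add, pow_add, mul_assoc]

lemma qPochhammer_add' (a q : R) (k m : ℕ) :
    qPochhammer a q (k + m) = qPochhammer a q m * qPochhammer (a * q ^ m) q k := by
  rw [add_comm, qPochhammer_add]

lemma qPochhammer_succ' (a q : R) (m : ℕ) :
    qPochhammer a q (m + 1) = (1 - a) * qPochhammer (a * q) q m := by
  rw [qPochhammer_add', qPochhammer_succ, qPochhammer_zero, pow_zero, mul_one, one_mul, pow_one]

lemma gaussBinom_succ_succ_mul (q y : R) (k m : ℕ) :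
    gaussBinom q (k + m + 1) (k + 1) * (1 - y * q ^ (k + m)) =
      gaussBinom q (k + m) (k + 1) * (1 - y * q ^ (k + m + (k + 1))) +
        q ^ m * gaussBinom q (k + m) k * (1 - y * q ^ k) := by
  linear_combination gaussBinom_succ_succ' q k m -
    y * q ^ (k + m) * gaussBinom_succ_succ q (k + m) k

lemma gaussBinom_mul_qPochhammer (q : R) (k m : ℕ) :
    gaussBinom q (k + m) k * (qPochhammer q q k * qPochhammer q q m) =
      qPochhammer q q (k + m) := by
  induction k generalizing m with
  | zero => simp
  | succ k ihk =>
    induction m with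
    | zero => simp
    | succ m ihm =>
      have hk := ihk (m + 1)
      rw [show k + 1 + m = k + (m + 1) by omega] at ihm
      rw [show k + 1 + (m + 1) = k + (m + 1) + 1 by omega, gaussBinom_succ_succ]
      rw [qPochhammer_succ q q k] at ihm ⊢
      rw [qPochhammer_succ q q m] at hk ⊢
      rw [qPochhammer_succ q q (k + (m + 1))]
      linear_combination (1 - q * q ^ k) * hk + q ^ (k + 1) * (1 - q * q ^ m) * ihm

/-- The summand of index `k` in the division-free form of the q-Pfaff–Saalschütz sum of order
`k + m`, with `c = abd`. -/
def saalschutzTerm (q a b d : R) (k m : ℕ) : R :=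
  gaussBinom q (k + m) k * (qPochhammer a q k * qPochhammer b q k * d ^ k) *
    (qPochhammer d q m * qPochhammer (a * b * d * q ^ k) q m)

lemma saalschutzTerm_zero_succ (q a b d : R) (m : ℕ) :
    saalschutzTerm q a b d 0 (m + 1) =
      (1 - d * q ^ m) * (1 - a * b * d * q ^ m) * saalschutzTerm q a b d 0 m := by
  simp only [saalschutzTerm, gaussBinom_zero_right, qPochhammer_zero, qPochhammer_succ, pow_zero,
    mul_one]
  ring

lemma saalschutzTerm_succ_zero (q a b d : R) (k : ℕ) :
    saalschutzTerm q a b d (k + 1) 0 =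
      d * (1 - a * q ^ k) * (1 - b * q ^ k) * saalschutzTerm q a b d k 0 := by
  simp only [saalschutzTerm, add_zero, gaussBinom_self, qPochhammer_zero, qPochhammer_succ]
  ring

lemma saalschutzTerm_succ_succ (q a b d : R) (k m : ℕ) :
    saalschutzTerm q a b d (k + 1) (m + 1) =
      (1 - d * q ^ m) * (1 - a * b * d * q ^ (2 * (k + 1) + m)) *
          saalschutzTerm q a b d (k + 1) m +
        q ^ (m + 1) * d * (1 - a * q ^ k) * (1 - b * q ^ k) *
          saalschutzTerm q a b d k (m + 1) := by
  have hlast := qPochhammer_succ (a * b * d * q ^ (k + 1)) q m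
  have hfirst : qPochhammer (a * b * d * q ^ k) q (m + 1) =
      (1 - a * b * d * q ^ k) * qPochhammer (a * b * d * q ^ (k + 1)) q m := by
    rw [qPochhammer_succ', pow_succ, mul_assoc _ (q ^ k)]
  have hpascal := gaussBinom_succ_succ_mul q (a * b * d) k (m + 1)
  simp only [saalschutzTerm, hlast, hfirst, qPochhammer_succ a, qPochhammer_succ b,
    qPochhammer_succ d, show k + 1 + (m + 1) = k + (m + 1) + 1 by omega,
    show k + 1 + m = k + (m + 1) by omega]
  linear_combination qPochhammer a q k * (1 - a * q ^ k) * (qPochhammer b q k * (1 - b * q ^ k)) *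
    d ^ (k + 1) * (qPochhammer d q m * (1 - d * q ^ m)) *
    qPochhammer (a * b * d * q ^ (k + 1)) q m * hpascal

theorem sum_saalschutzTerm (q a b d : R) (n : ℕ) :
    ∑ p ∈ antidiagonal n, saalschutzTerm q a b d p.1 p.2 =
      qPochhammer (a * d) q n * qPochhammer (b * d) q n := by
  induction n with
  | zero => simp [saalschutzTerm]
  | succ n ih =>
    rw [sum_antidiagonal_succ_of_split (saalschutzTerm q a b d)
      (fun k m ↦ (1 - d * q ^ m) * (1 - a * b * d * q ^ (2 * k + m)) * saalschutzTerm q a b d k m)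
      (fun k m ↦ q ^ m * d * (1 - a * q ^ k) * (1 - b * q ^ k) * saalschutzTerm q a b d k m)
      (fun m ↦ by simpa using saalschutzTerm_zero_succ q a b d m)
      (fun k ↦ by simpa using saalschutzTerm_succ_zero q a b d k)
      (saalschutzTerm_succ_succ q a b d)]
    have hshares : ∀ p ∈ antidiagonal n,
        (1 - d * q ^ p.2) * (1 - a * b * d * q ^ (2 * p.1 + p.2)) *
            saalschutzTerm q a b d p.1 p.2 +
          q ^ p.2 * d * (1 - a * q ^ p.1) * (1 - b * q ^ p.1) * saalschutzTerm q a b d p.1 p.2 =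
        (1 - a * d * q ^ n) * (1 - b * d * q ^ n) * saalschutzTerm q a b d p.1 p.2 := by
      intro p hp
      rw [← mem_antidiagonal.mp hp]
      ring
    rw [sum_congr rfl hshares, ← mul_sum, ih, qPochhammer_succ, qPochhammer_succ]
    ring

end CommRing

section Field

variable {K : Type*} [Field K]

lemma qPochhammer_eq_neg_pow_mul_reverse {z q : K} (hz : z ≠ 0) (hq : q ≠ 0) (k : ℕ) :
    qPochhammer z q k =
      (-z) ^ k * q ^ k.choose 2 * qPochhammer (z⁻¹ * q ^ (1 - (k : ℤ))) q k := by
  have hfactor : ∀ i ∈ range k, 1 - z⁻¹ * q ^ (1 - (k : ℤ)) * q ^ (k - 1 - i) =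
      1 - z⁻¹ * (q ^ i)⁻¹ := by
    intro i hi
    have hi := mem_range.mp hi
    rw [mul_assoc, ← zpow_natCast, ← zpow_add₀ hq, ← zpow_natCast, ← zpow_neg]
    congr 3
    omega
  calc qPochhammer z q k
      = ∏ i ∈ range k, -z * q ^ i * (1 - z⁻¹ * (q ^ i)⁻¹) :=
        prod_congr rfl fun i _ ↦ by field_simp; ring
    _ = (-z) ^ k * q ^ k.choose 2 * ∏ i ∈ range k, (1 - z⁻¹ * (q ^ i)⁻¹) := by
        rw [prod_mul_distrib, prod_mul_distrib, prod_const, card_range, prod_pow_eq_pow_sum,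
          sum_range_id, Nat.choose_two_right]
    _ = _ := by rw [← prod_congr rfl hfactor, qPochhammer,
        prod_range_reflect (fun i ↦ 1 - z⁻¹ * q ^ (1 - (k : ℤ)) * q ^ i)]

lemma qPochhammer_mul_pow_eq_reverse {x q : K} (hx : x ≠ 0) (hq : q ≠ 0) (k m : ℕ) :
    qPochhammer (x * q ^ m) q k = (-(x * q ^ m)) ^ k * q ^ k.choose 2 *
      qPochhammer (x⁻¹ * q ^ (1 - ((k + m : ℕ) : ℤ))) q k := by
  rw [qPochhammer_eq_neg_pow_mul_reverse (mul_ne_zero hx (pow_ne_zero m hq)) hq, mul_inv,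
    mul_assoc x⁻¹, ← zpow_natCast q m, ← zpow_neg, ← zpow_add₀ hq]
  congr 4
  push_cast
  ring

lemma qPochhammer_reverse_mul {x y q : K} (hx : x ≠ 0) (hy : y ≠ 0) (hq : q ≠ 0) (k m : ℕ) :
    x ^ k * qPochhammer (x⁻¹ * q ^ (1 - ((k + m : ℕ) : ℤ))) q k * qPochhammer (y * q ^ m) q k =
      y ^ k * qPochhammer (y⁻¹ * q ^ (1 - ((k + m : ℕ) : ℤ))) q k *
        qPochhammer (x * q ^ m) q k := by
  rw [qPochhammer_mul_pow_eq_reverse hx hq, qPochhammer_mul_pow_eq_reverse hy hq, neg_pow (x * _),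
    neg_pow (y * _), mul_pow, mul_pow]
  ring

lemma qPochhammer_reverse_div_eq_gaussBinom {q d : K} (hq : q ≠ 0) (hd : d ≠ 0) {k m : ℕ}
    (hqn : qPochhammer q q (k + m) ≠ 0) (hdn : qPochhammer d q (k + m) ≠ 0) :
    qPochhammer (q ^ (-((k + m : ℕ) : ℤ))) q k * q ^ k /
        (qPochhammer (d⁻¹ * q ^ (1 - ((k + m : ℕ) : ℤ))) q k * qPochhammer q q k) =
      gaussBinom q (k + m) k * d ^ k / qPochhammer (d * q ^ m) q k := by
  have hqk : qPochhammer q q k ≠ 0 := left_ne_zero_of_mul (qPochhammer_add q q k m ▸ hqn)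
  rw [qPochhammer_add'] at hqn hdn
  have hbinom : gaussBinom q (k + m) k * qPochhammer q q k = qPochhammer (q * q ^ m) q k :=
    mul_left_cancel₀ (left_ne_zero_of_mul hqn) <| by
      linear_combination gaussBinom_mul_qPochhammer q k m + qPochhammer_add' q q k m
  have hdk : qPochhammer (d * q ^ m) q k ≠ 0 := right_ne_zero_of_mul hdn
  have hrev := qPochhammer_reverse_mul hq hd hq k m
  have hrev_ne : qPochhammer (d⁻¹ * q ^ (1 - ((k + m : ℕ) : ℤ))) q k ≠ 0 :=
    right_ne_zero_of_mul (qPochhammer_mul_pow_eq_reverse hd hq k m ▸ hdk)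
  rw [show q⁻¹ * q ^ (1 - ((k + m : ℕ) : ℤ)) = q ^ (-((k + m : ℕ) : ℤ)) by
    rw [← zpow_neg_one, ← zpow_add₀ hq]; congr 1; ring] at hrev
  rw [div_eq_div_iff (mul_ne_zero hrev_ne hqk) hdk]
  linear_combination hrev -
    d ^ k * qPochhammer (d⁻¹ * q ^ (1 - ((k + m : ℕ) : ℤ))) q k * hbinom

lemma saalschutz_summand_eq_saalschutzTerm_div {q d : K} (a b : K) (hq : q ≠ 0) (hd : d ≠ 0)
    {k m : ℕ} (hqn : qPochhammer q q (k + m) ≠ 0) (hdn : qPochhammer d q (k + m) ≠ 0)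
    (hcn : qPochhammer (a * b * d) q (k + m) ≠ 0) :
    (qPochhammer a q k * qPochhammer b q k * qPochhammer (q ^ (-((k + m : ℕ) : ℤ))) q k) /
        (qPochhammer (a * b * d) q k *
          qPochhammer (d⁻¹ * q ^ (1 - ((k + m : ℕ) : ℤ))) q k * qPochhammer q q k) * q ^ k =
      saalschutzTerm q a b d k m /
        (qPochhammer (a * b * d) q (k + m) * qPochhammer d q (k + m)) := by
  have hratio := qPochhammer_reverse_div_eq_gaussBinom hq hd hqn hdn
  rw [qPochhammer_add'] at hdn
  rw [qPochhammer_add] at hcn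
  rw [qPochhammer_add' d, qPochhammer_add (a * b * d)]
  obtain ⟨hdm, hdk⟩ := mul_ne_zero_iff.mp hdn
  obtain ⟨hck, hcm⟩ := mul_ne_zero_iff.mp hcn
  calc _ = qPochhammer a q k * qPochhammer b q k / qPochhammer (a * b * d) q k *
        (qPochhammer (q ^ (-((k + m : ℕ) : ℤ))) q k * q ^ k /
          (qPochhammer (d⁻¹ * q ^ (1 - ((k + m : ℕ) : ℤ))) q k * qPochhammer q q k)) := by ring
    _ = _ := by
      rw [hratio, saalschutzTerm]
      field_simp

theorem q_pfaff_saalschutz_general (n : ℕ) {q a b c : K}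
    (hq : q ≠ 0) (hc : c ≠ 0) (ha : a ≠ 0) (hb : b ≠ 0)
    (hcn : qPochhammer c q n ≠ 0) (hqn : qPochhammer q q n ≠ 0)
    (hcab : qPochhammer (c / (a * b)) q n ≠ 0) :
    ∑ k ∈ range (n + 1),
      (qPochhammer a q k * qPochhammer b q k * qPochhammer (q ^ (-(n : ℤ))) q k) /
        (qPochhammer c q k * qPochhammer (a * b * q ^ (1 - (n : ℤ)) / c) q k *
          qPochhammer q q k) * q ^ k =
      (qPochhammer (c / a) q n * qPochhammer (c / b) q n) /
        (qPochhammer c q n * qPochhammer (c / (a * b)) q n) := by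
  obtain ⟨d, rfl⟩ : ∃ d, c = a * b * d := ⟨c / (a * b), by field_simp⟩
  have hd : d ≠ 0 := right_ne_zero_of_mul hc
  have hcab_eq : a * b * d / (a * b) = d := by field_simp
  have hca_eq : a * b * d / a = b * d := by field_simp
  have hcb_eq : a * b * d / b = a * d := by field_simp
  have hinv_eq : a * b * q ^ (1 - (n : ℤ)) / (a * b * d) = d⁻¹ * q ^ (1 - (n : ℤ)) := by field_simp
  rw [hcab_eq] at hcab ⊢
  rw [hca_eq, hcb_eq, hinv_eq, mul_comm (qPochhammer (b * d) q n), ← sum_saalschutzTerm, sum_div,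
    Nat.sum_antidiagonal_eq_sum_range_succ_mk]
  refine sum_congr rfl fun k hk ↦ ?_
  obtain ⟨m, rfl⟩ := Nat.exists_eq_add_of_le (mem_range_succ_iff.mp hk)
  rw [Nat.add_sub_cancel_left]
  exact saalschutz_summand_eq_saalschutzTerm_div a b hq hd hqn hcab hcn

end Field

/-- Jackson's q-analog of the Pfaff–Saalschütz sum:
`∑_{k=0}^{n} (a;q)_k (b;q)_k (q^{−n};q)_k / ((c;q)_k (abq^{1−n}/c;q)_k (q;q)_k) · q^k
  = (c/a;q)_n (c/b;q)_n / ((c;q)_n (c/(ab);q)_n)`. -/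
theorem q_pfaff_saalschutz (n : ℕ) (q a b c : ℂ)
    (hq : q ≠ 0) (hc : c ≠ 0) (ha : a ≠ 0) (hb : b ≠ 0)
    (hck : ∀ k ≤ n, qShiftedFactorial c q k ≠ 0)
    (habk : ∀ k ≤ n, qShiftedFactorial (a * b * q ^ (1 - (n : ℤ)) / c) q k ≠ 0)
    (hqq : ∀ k ≤ n, qShiftedFactorial q q k ≠ 0)
    (hcab : qShiftedFactorial (c / (a * b)) q n ≠ 0) :
    ∑ k ∈ Finset.range (n + 1),
      (qShiftedFactorial a q k * qShiftedFactorial b q k *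
          qShiftedFactorial (q ^ (-(n : ℤ))) q k) /
        (qShiftedFactorial c q k *
          qShiftedFactorial (a * b * q ^ (1 - (n : ℤ)) / c) q k *
          qShiftedFactorial q q k) * q ^ k
      = (qShiftedFactorial (c / a) q n * qShiftedFactorial (c / b) q n) /
          (qShiftedFactorial c q n * qShiftedFactorial (c / (a * b)) q n) := by
  exact q_pfaff_saalschutz_general n hq hc ha hb (hck n le_rfl) (hqq n le_rfl) hcab
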